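/- arXiv:0710.3912 — 6 statements merged into one kernel-verified Lean document; each statement's English description precedes it below -/
import Mathlib

section
/- Let f : ℝ → ℝ be Lipschitz continuous, let g : ℝ → ℝ be a measurable function such that f is differentiable with derivative f'(x) = g(x) for almost every x ∈ ℝ, and let ω : ℝ → ℝ be a smooth nonnegative function with compact support and ∫_ℝ ω = 1. Then the convolution f * ω is differentiable everywhere and (f * ω)'(x) = (g * ω)(x) for every x ∈ ℝ. -/
open MeasureTheory

/-!
After the substitution `t ↦ x - t`, the convolution of `f` and `ω` along a bilinear map `L` is
`∫ L (f (x - t)) (ω t) dt`, where `x` occurs only in the factor `f`, which is `K`-Lipschitz. The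
integrand is therefore Lipschitz in `x` with the constant `‖L‖ * K * ‖ω t‖`, integrable in `t`, and
for almost every `t` it is differentiable at the given `x`, because preimages of null sets under
`t ↦ x - t` are null sets. Dominated convergence allows differentiation under the integral sign.
-/

open Convolution ContinuousLinearMap
open scoped NNReal

section Frechet

variable {𝕜 G E E' F : Type*} [RCLike 𝕜]
  [NormedAddCommGroup G] [NormedAddCommGroup E] [NormedAddCommGroup E'] [NormedAddCommGroup F]
  [NormedSpace 𝕜 E] [NormedSpace 𝕜 E'] [NormedSpace 𝕜 F]
  {f : G → E} {ω : G → E'} {K : ℝ≥0} (L : E →L[𝕜] E' →L[𝕜] F)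

theorem lipschitzWith_convolution_integrand_swap (hf : LipschitzWith K f) (t : G) (e : E') :
    LipschitzWith (‖L‖₊ * K * ‖e‖₊) fun y => L (f (y - t)) e := by
  refine LipschitzWith.of_dist_le_mul fun y z => ?_
  calc dist (L (f (y - t)) e) (L (f (z - t)) e)
      = ‖L (f (y - t) - f (z - t)) e‖ := by rw [dist_eq_norm, map_sub, sub_apply]
    _ ≤ ‖L‖ * ‖f (y - t) - f (z - t)‖ * ‖e‖ := L.le_opNorm₂ _ _
    _ ≤ ‖L‖ * (K * dist y z) * ‖e‖ := by
        have h := hf.dist_le_mul (y - t) (z - t)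
        rw [dist_sub_right, dist_eq_norm (f _)] at h
        gcongr
    _ = ↑(‖L‖₊ * K * ‖e‖₊) * dist y z := by push_cast; ring

variable [NormedSpace 𝕜 G] [MeasurableSpace G] [BorelSpace G] [SecondCountableTopology G]
  {μ : Measure G} [SFinite μ] [μ.IsAddLeftInvariant]

theorem ae_hasFDerivAt_convolution_integrand_swap {f' : G → G →L[𝕜] E}
    (hff' : ∀ᵐ t ∂μ, HasFDerivAt f (f' t) t) (x : G) :
    ∀ᵐ t ∂μ, HasFDerivAt (fun y => L (f (y - t)) (ω t)) (L.precompL G (f' (x - t)) (ω t)) x := by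
  filter_upwards [(quasiMeasurePreserving_sub_left_of_right_invariant μ x).ae hff'] with t ht
  exact (L.flip (ω t)).hasFDerivAt.comp x ((hasFDerivAt_comp_sub t).2 ht)

theorem hasFDerivAt_convolution_of_lipschitzWith [μ.IsNegInvariant] [NormedSpace ℝ F]
    {f' : G → G →L[𝕜] E} (hf : LipschitzWith K f) (hf' : AEStronglyMeasurable f' μ)
    (hff' : ∀ᵐ t ∂μ, HasFDerivAt f (f' t) t) (hω : Integrable ω μ) {x : G}
    (hfω : ConvolutionExistsAt f ω x L μ) :
    ConvolutionExistsAt f' ω x (L.precompL G) μ ∧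
      HasFDerivAt (f ⋆[L, μ] ω) ((f' ⋆[L.precompL G, μ] ω) x) x := by
  rw [convolutionExistsAt_iff_integrable_swap] at hfω ⊢
  have convolution_swap : f ⋆[L, μ] ω = fun y => ∫ t, L (f (y - t)) (ω t) ∂μ :=
    funext fun _ => convolution_eq_swap L
  rw [convolution_swap, convolution_eq_swap]
  exact hasFDerivAt_integral_of_dominated_loc_of_lip' Filter.univ_mem
    (fun y _ => hf.continuous.aestronglyMeasurable.convolution_integrand_swap_snd L
      hω.aestronglyMeasurable y)
    hfω (hf'.convolution_integrand_swap_snd (L.precompL G) hω.aestronglyMeasurable x)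
    (.of_forall fun t y _ =>
      (lipschitzWith_convolution_integrand_swap L hf t (ω t)).norm_sub_le y x)
    (hω.norm.const_mul (‖L‖ * K)) (ae_hasFDerivAt_convolution_integrand_swap L hff' x)

end Frechet

section OneVariable

variable {𝕜 E E' F : Type*} [RCLike 𝕜]
  [NormedAddCommGroup E] [NormedAddCommGroup E'] [NormedAddCommGroup F]
  [NormedSpace 𝕜 E] [NormedSpace 𝕜 E'] [NormedSpace 𝕜 F]

theorem aestronglyMeasurable_of_ae_hasDerivAt [CompleteSpace E] {f f' : 𝕜 → E} {μ : Measure 𝕜}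
    (hff' : ∀ᵐ t ∂μ, HasDerivAt f (f' t) t) : AEStronglyMeasurable f' μ :=
  (aestronglyMeasurable_deriv f μ).congr (hff'.mono fun _ ht => ht.deriv)

theorem stmt_0_general [CompleteSpace E] [NormedSpace ℝ F]
    {f f' : 𝕜 → E} {ω : 𝕜 → E'} {K : ℝ≥0} (L : E →L[𝕜] E' →L[𝕜] F) {μ : Measure 𝕜}
    [μ.IsAddLeftInvariant] [μ.IsNegInvariant] [SFinite μ] (hf : LipschitzWith K f)
    (hff' : ∀ᵐ t ∂μ, HasDerivAt f (f' t) t) (hω : Integrable ω μ) {x : 𝕜}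
    (hfω : ConvolutionExistsAt f ω x L μ) :
    HasDerivAt (f ⋆[L, μ] ω) ((f' ⋆[L, μ] ω) x) x := by
  have hf' : AEStronglyMeasurable (fun t => toSpanSingleton 𝕜 (f' t)) μ :=
    (toSpanSingletonCLE (𝕜 := 𝕜) (E := E)).continuous.comp_aestronglyMeasurable
      (aestronglyMeasurable_of_ae_hasDerivAt hff')
  obtain ⟨hf'ω, hderiv⟩ := hasFDerivAt_convolution_of_lipschitzWith L hf hf'
    (hff'.mono fun _ ht => ht.hasFDerivAt) hω hfω
  convert hderiv.hasDerivAt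
  rw [convolution_def, convolution_def, integral_apply hf'ω.integrable]
  simp only [precompL_apply, toSpanSingleton_apply_one]

end OneVariable

/-- If `f : ℝ → ℝ` is Lipschitz with a.e. derivative `g` (measurable), and `ω` is a
smooth nonnegative compactly supported function with integral 1, then the convolution
`f * ω` is differentiable everywhere with derivative `g * ω`. -/
theorem stmt_0 (f g ω : ℝ → ℝ) (K : NNReal) (hf : LipschitzWith K f)
    (hg : Measurable g)
    (hfg : ∀ᵐ x ∂(volume : Measure ℝ), HasDerivAt f (g x) x)
    (hω : ContDiff ℝ (⊤ : ℕ∞) ω) (hω0 : ∀ x, 0 ≤ ω x) (hωc : HasCompactSupport ω)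
    (hω1 : (∫ x, ω x) = 1) :
    ∀ x : ℝ, HasDerivAt (fun y => ∫ t, f t * ω (y - t)) (∫ t, g t * ω (x - t)) x := by
  intro x
  exact stmt_0_general (.mul ℝ ℝ) hf hfg
    (hω.continuous.integrable_of_hasCompactSupport hωc)
    (hωc.convolutionExists_right _ hf.continuous.locallyIntegrable hω.continuous x)
end

section
/- For every ε with 0 < ε < 1/2 there exists a twice continuously differentiable function g_ε : [0, 1/2) → ℝ such that: g_ε(0) = 0, g_ε'(0) = 1, g_ε''(0) = 0; g_ε''(r) ≤ −r for all r ∈ [0, 1/2); g_ε'(r) ≤ g₀'(r) = 1 − 3r² for all r ∈ [0, 1/2); and g_ε(r) = g₀(r)/2 = r(1 − r²)/2 for all r ∈ [ε, 1/2). -/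
/-!
Let `h` be a `C¹` cutoff equal to `1` at `0` and to `0` from `1` on. Add to `g₀ / 2` the primitive
`Φ` of `φ r = m (a h(a r) - b h(b r))`, where `a ≥ b = 1 / ε`. The functions `a h(a r)` and
`b h(b r)` have the same integral, so `Φ` vanishes beyond `ε` whatever `m` and `a` are. The sharp
bump `m a h(a r)` raises `g'` to `1` at `0`, which forces `m (a - b) = 1 / 2`; being decreasing, it
only helps the upper bound on `g''`. The wide bump costs at most `4 m b³ r` in `g''`, and
`2 m b³ = 1` keeps this within the gap `2 r` between `g₀'' / 2 = -3 r` and `-r`.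
-/

open Set

theorem hasDerivAt_comp_min_of_deriv_eq_zero {F : Type*} [NormedAddCommGroup F] [NormedSpace ℝ F]
    {p p' : ℝ → F} {d : ℝ} (hp : ∀ x ≤ d, HasDerivAt p (p' x) x) (hd : p' d = 0) (x : ℝ) :
    HasDerivAt (fun y ↦ p (min y d)) (p' (min x d)) x := by
  rcases lt_trichotomy x d with hx | rfl | hx
  · rw [min_eq_left hx.le]
    exact (hp x hx.le).congr_of_eventuallyEq <|
      (eventually_le_nhds hx).mono fun y hy ↦ by simp only [min_eq_left hy]
  · have hleft : HasDerivWithinAt (fun y ↦ p (min y x)) (p' x) (Iic x) x :=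
      (hp x le_rfl).hasDerivWithinAt.congr (fun y hy ↦ by rw [min_eq_left hy]) (by rw [min_self])
    have hright : HasDerivWithinAt (fun y ↦ p (min y x)) (p' x) (Ici x) x :=
      hd ▸ (hasDerivWithinAt_const x _ (p x)).congr (fun y hy ↦ by rw [min_eq_right hy])
        (by rw [min_self])
    rw [min_self, ← hasDerivWithinAt_univ, ← Iic_union_Ici (a := x)]
    exact hleft.union hright
  · rw [min_eq_right hx.le, hd]
    exact (hasDerivAt_const x (p d)).congr_of_eventuallyEq <|
      (eventually_ge_nhds hx).mono fun y hy ↦ by simp only [min_eq_right hy]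

section Cutoff

/-- A `C¹` cutoff on `[0, ∞)`, decreasing from `1` at `0` to `0` on `[1, ∞)`; freezing the
polynomial `(1 - u²)²` at its critical point `1` by `min` keeps it differentiable. Its values for
`u < 0` play no role. -/
def quarticCutoff (u : ℝ) : ℝ := (1 - min u 1 ^ 2) ^ 2

/-- The derivative of `quarticCutoff`. -/
def quarticCutoffDeriv (u : ℝ) : ℝ := -4 * min u 1 * (1 - min u 1 ^ 2)

/-- The primitive of `quarticCutoff` vanishing at `0`. -/
noncomputable def quarticCutoffPrimitive (u : ℝ) : ℝ :=
  min u 1 - 2 * min u 1 ^ 3 / 3 + min u 1 ^ 5 / 5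

theorem hasDerivAt_quarticCutoff (u : ℝ) :
    HasDerivAt quarticCutoff (quarticCutoffDeriv u) u := by
  refine hasDerivAt_comp_min_of_deriv_eq_zero (p := fun x ↦ (1 - x ^ 2) ^ 2)
    (p' := fun x ↦ -4 * x * (1 - x ^ 2)) (fun x _ ↦ ?_) (by norm_num) u
  exact (((hasDerivAt_pow 2 x).const_sub 1).pow 2).congr_deriv (by norm_num; ring)

theorem hasDerivAt_quarticCutoffPrimitive (u : ℝ) :
    HasDerivAt quarticCutoffPrimitive (quarticCutoff u) u := by
  refine hasDerivAt_comp_min_of_deriv_eq_zero (p := fun x ↦ x - 2 * x ^ 3 / 3 + x ^ 5 / 5)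
    (p' := fun x ↦ (1 - x ^ 2) ^ 2) (fun x _ ↦ ?_) (by norm_num) u
  exact (((hasDerivAt_id x).sub (((hasDerivAt_pow 3 x).const_mul 2).div_const 3)).add
    ((hasDerivAt_pow 5 x).div_const 5)).congr_deriv (by norm_num; ring)

theorem continuous_quarticCutoffDeriv : Continuous quarticCutoffDeriv := by
  unfold quarticCutoffDeriv
  fun_prop

@[simp]
theorem quarticCutoff_zero : quarticCutoff 0 = 1 := by simp [quarticCutoff]

@[simp]
theorem quarticCutoffDeriv_zero : quarticCutoffDeriv 0 = 0 := by simp [quarticCutoffDeriv]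

@[simp]
theorem quarticCutoffPrimitive_zero : quarticCutoffPrimitive 0 = 0 := by
  simp [quarticCutoffPrimitive]

variable {u : ℝ}

theorem quarticCutoff_of_one_le (hu : 1 ≤ u) : quarticCutoff u = 0 := by
  simp [quarticCutoff, min_eq_right hu]

theorem quarticCutoffPrimitive_of_one_le (hu : 1 ≤ u) :
    quarticCutoffPrimitive u = quarticCutoffPrimitive 1 := by
  simp only [quarticCutoffPrimitive, min_eq_right hu, min_self]

theorem quarticCutoff_nonneg (u : ℝ) : 0 ≤ quarticCutoff u := sq_nonneg _

theorem quarticCutoff_le_one_sub_sq (hu₀ : 0 ≤ u) (hu₁ : u ≤ 1) :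
    quarticCutoff u ≤ 1 - u ^ 2 := by
  have hsq : u ^ 2 ≤ 1 := pow_le_one₀ hu₀ hu₁
  rw [quarticCutoff, min_eq_left hu₁]
  nlinarith [sq_nonneg u]

theorem one_sub_two_mul_sq_le_quarticCutoff (hu : 0 ≤ u) :
    1 - 2 * u ^ 2 ≤ quarticCutoff u := by
  have hmin : min u 1 ^ 2 ≤ u ^ 2 :=
    pow_le_pow_left₀ (le_min hu zero_le_one) (min_le_left u 1) 2
  rw [quarticCutoff]
  nlinarith [sq_nonneg (min u 1 ^ 2)]

theorem quarticCutoffDeriv_nonpos (hu : 0 ≤ u) : quarticCutoffDeriv u ≤ 0 := by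
  have hmin : 0 ≤ min u 1 := le_min hu zero_le_one
  have hsq : min u 1 ^ 2 ≤ 1 := pow_le_one₀ hmin (min_le_right u 1)
  rw [quarticCutoffDeriv]
  nlinarith

theorem neg_four_mul_le_quarticCutoffDeriv (hu : 0 ≤ u) : -4 * u ≤ quarticCutoffDeriv u := by
  have hmin : 0 ≤ min u 1 := le_min hu zero_le_one
  have hmin_le : min u 1 ≤ u := min_le_left u 1
  have hcube : 0 ≤ min u 1 ^ 3 := pow_nonneg hmin 3
  rw [quarticCutoffDeriv]
  linarith

end Cutoff

section PerturbedProfile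

/-- The function `g_ε` of the paper for suitable parameters: half of `g₀ r = r (1 - r²)`, plus the
primitive of a bump supported in `[0, 1 / a]`, minus that of a bump of the same mass supported in
`[0, 1 / b]`. Rates `a`, `b` are used instead of the widths `1 / a`, `1 / b` to avoid divisions. -/
noncomputable def perturbedProfile (m a b r : ℝ) : ℝ :=
  r * (1 - r ^ 2) / 2 + m * (quarticCutoffPrimitive (a * r) - quarticCutoffPrimitive (b * r))

/-- The first derivative of `perturbedProfile`. -/
noncomputable def perturbedProfileDeriv (m a b r : ℝ) : ℝ :=
  (1 - 3 * r ^ 2) / 2 + m * (a * quarticCutoff (a * r) - b * quarticCutoff (b * r))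

/-- The second derivative of `perturbedProfile`. -/
def perturbedProfileDeriv₂ (m a b r : ℝ) : ℝ :=
  -3 * r + m * (a ^ 2 * quarticCutoffDeriv (a * r) - b ^ 2 * quarticCutoffDeriv (b * r))

theorem hasDerivAt_perturbedProfile (m a b r : ℝ) :
    HasDerivAt (perturbedProfile m a b) (perturbedProfileDeriv m a b r) r := by
  have hbase : HasDerivAt (fun x : ℝ ↦ x * (1 - x ^ 2) / 2) ((1 - 3 * r ^ 2) / 2) r :=
    (((hasDerivAt_id r).mul ((hasDerivAt_pow 2 r).const_sub 1)).div_const 2).congr_deriv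
      (by norm_num; ring)
  have hbump (k : ℝ) : HasDerivAt (fun x ↦ quarticCutoffPrimitive (k * x))
      (k * quarticCutoff (k * r)) r :=
    ((hasDerivAt_quarticCutoffPrimitive (k * r)).comp r (hasDerivAt_const_mul k)).congr_deriv
      (mul_comm _ _)
  exact hbase.add (((hbump a).sub (hbump b)).const_mul m)

theorem hasDerivAt_perturbedProfileDeriv (m a b r : ℝ) :
    HasDerivAt (perturbedProfileDeriv m a b) (perturbedProfileDeriv₂ m a b r) r := by
  have hbase : HasDerivAt (fun x : ℝ ↦ (1 - 3 * x ^ 2) / 2) (-3 * r) r :=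
    ((((hasDerivAt_pow 2 r).const_mul 3).const_sub 1).div_const 2).congr_deriv
      (by norm_num; ring)
  have hbump (k : ℝ) : HasDerivAt (fun x ↦ k * quarticCutoff (k * x))
      (k ^ 2 * quarticCutoffDeriv (k * r)) r :=
    (((hasDerivAt_quarticCutoff (k * r)).comp r (hasDerivAt_const_mul k)).const_mul k).congr_deriv
      (by ring)
  exact hbase.add (((hbump a).sub (hbump b)).const_mul m)

theorem continuous_perturbedProfileDeriv₂ (m a b : ℝ) :
    Continuous (perturbedProfileDeriv₂ m a b) := by
  have := continuous_quarticCutoffDeriv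
  unfold perturbedProfileDeriv₂
  fun_prop

theorem perturbedProfile_zero (m a b : ℝ) : perturbedProfile m a b 0 = 0 := by
  simp [perturbedProfile]

theorem perturbedProfileDeriv₂_zero (m a b : ℝ) : perturbedProfileDeriv₂ m a b 0 = 0 := by
  simp [perturbedProfileDeriv₂]

variable {m a b r : ℝ}

theorem perturbedProfileDeriv_zero (hab : m * (a - b) = 1 / 2) :
    perturbedProfileDeriv m a b 0 = 1 := by
  simp only [perturbedProfileDeriv, mul_zero, quarticCutoff_zero]
  linarith

theorem perturbedProfile_of_one_le (har : 1 ≤ a * r) (hbr : 1 ≤ b * r) :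
    perturbedProfile m a b r = r * (1 - r ^ 2) / 2 := by
  simp [perturbedProfile, quarticCutoffPrimitive_of_one_le har,
    quarticCutoffPrimitive_of_one_le hbr]

theorem perturbedProfileDeriv₂_le_neg (hm : 0 ≤ m) (ha : 0 ≤ a) (hb : 0 ≤ b)
    (hmb : 2 * m * b ^ 3 ≤ 1) (hr : 0 ≤ r) : perturbedProfileDeriv₂ m a b r ≤ -r := by
  have hsharp : m * a ^ 2 * quarticCutoffDeriv (a * r) ≤ 0 :=
    mul_nonpos_of_nonneg_of_nonpos (by positivity) (quarticCutoffDeriv_nonpos (by positivity))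
  have hwide : m * b ^ 2 * (-4 * (b * r)) ≤ m * b ^ 2 * quarticCutoffDeriv (b * r) :=
    mul_le_mul_of_nonneg_left (neg_four_mul_le_quarticCutoffDeriv (by positivity)) (by positivity)
  have hgap : 2 * m * b ^ 3 * r ≤ 1 * r := mul_le_mul_of_nonneg_right hmb hr
  rw [perturbedProfileDeriv₂]
  linarith

theorem perturbedProfileDeriv_le_of_le_one (hm : 0 ≤ m) (ha : 0 ≤ a) (hb : 0 ≤ b)
    (hab : m * (a - b) = 1 / 2) (hm3 : 3 / 2 ≤ m * (a ^ 3 - 2 * b ^ 3)) (hr : 0 ≤ r)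
    (har : a * r ≤ 1) : perturbedProfileDeriv m a b r ≤ 1 - 3 * r ^ 2 := by
  have hsharp : a * quarticCutoff (a * r) ≤ a * (1 - (a * r) ^ 2) :=
    mul_le_mul_of_nonneg_left (quarticCutoff_le_one_sub_sq (by positivity) har) ha
  have hwide : b * (1 - 2 * (b * r) ^ 2) ≤ b * quarticCutoff (b * r) :=
    mul_le_mul_of_nonneg_left (one_sub_two_mul_sq_le_quarticCutoff (by positivity)) hb
  calc perturbedProfileDeriv m a b r
      ≤ (1 - 3 * r ^ 2) / 2 + m * (a * (1 - (a * r) ^ 2) - b * (1 - 2 * (b * r) ^ 2)) := by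
        unfold perturbedProfileDeriv
        gcongr
    _ = (1 - 3 * r ^ 2) / 2 + m * (a - b) - m * (a ^ 3 - 2 * b ^ 3) * r ^ 2 := by ring
    _ ≤ (1 - 3 * r ^ 2) / 2 + 1 / 2 - 3 / 2 * r ^ 2 := by
        rw [hab]
        gcongr
    _ = 1 - 3 * r ^ 2 := by ring

theorem perturbedProfileDeriv_le_of_one_le (hm : 0 ≤ m) (hb : 0 ≤ b) (hr : 3 * r ^ 2 ≤ 1)
    (har : 1 ≤ a * r) : perturbedProfileDeriv m a b r ≤ 1 - 3 * r ^ 2 := by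
  have hwide : 0 ≤ m * (b * quarticCutoff (b * r)) :=
    mul_nonneg hm (mul_nonneg hb (quarticCutoff_nonneg _))
  rw [perturbedProfileDeriv, quarticCutoff_of_one_le har]
  linarith

theorem two_mul_rate_le (hm : 0 < m) (hb : 1 ≤ b) (hab : m * (a - b) = 1 / 2)
    (hmb : 2 * m * b ^ 3 ≤ 1) : 2 * b ≤ a := by
  have hcube : b ≤ b ^ 3 := le_self_pow₀ hb three_ne_zero
  have hsub : b ^ 3 ≤ a - b := le_of_mul_le_mul_left (by linarith) hm
  linarith

theorem three_halves_le_mul_sub_cubes (hm : 0 < m) (hb : 1 ≤ b) (hab : m * (a - b) = 1 / 2)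
    (hmb : 2 * m * b ^ 3 ≤ 1) : 3 / 2 ≤ m * (a ^ 3 - 2 * b ^ 3) := by
  have hba : 2 * b ≤ a := two_mul_rate_le hm hb hab hmb
  have hquad : 4 ≤ a ^ 2 + a * b + b ^ 2 := by nlinarith
  calc (3 : ℝ) / 2 ≤ 1 / 2 * (a ^ 2 + a * b + b ^ 2) - m * b ^ 3 := by linarith
    _ = m * (a ^ 3 - 2 * b ^ 3) := by rw [← hab]; ring

theorem perturbedProfileDeriv_le (hm : 0 < m) (hb : 1 ≤ b) (hab : m * (a - b) = 1 / 2)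
    (hmb : 2 * m * b ^ 3 ≤ 1) (hr₀ : 0 ≤ r) (hr : 3 * r ^ 2 ≤ 1) :
    perturbedProfileDeriv m a b r ≤ 1 - 3 * r ^ 2 := by
  have hb₀ : 0 ≤ b := zero_le_one.trans hb
  have ha : 0 ≤ a := by linarith [two_mul_rate_le hm hb hab hmb]
  rcases le_total (a * r) 1 with har | har
  · exact perturbedProfileDeriv_le_of_le_one hm.le ha hb₀ hab
      (three_halves_le_mul_sub_cubes hm hb hab hmb) hr₀ har
  · exact perturbedProfileDeriv_le_of_one_le hm.le hb₀ hr har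

end PerturbedProfile

/-- For every `0 < ε < 1/2` there is a twice continuously differentiable function
`g_ε` on `[0, 1/2)` with `g_ε(0) = 0`, `g_ε'(0) = 1`, `g_ε''(0) = 0`,
`g_ε''(r) ≤ -r`, `g_ε'(r) ≤ 1 - 3r²`, and `g_ε(r) = r(1-r²)/2` for `r ≥ ε`. -/
theorem stmt_4 (ε : ℝ) (hε0 : 0 < ε) (hε : ε < 1 / 2) :
    ∃ g g' g'' : ℝ → ℝ,
      (∀ r ∈ Set.Ico (0 : ℝ) (1 / 2), HasDerivWithinAt g (g' r) (Set.Ico 0 (1 / 2)) r) ∧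
      (∀ r ∈ Set.Ico (0 : ℝ) (1 / 2), HasDerivWithinAt g' (g'' r) (Set.Ico 0 (1 / 2)) r) ∧
      ContinuousOn g'' (Set.Ico 0 (1 / 2)) ∧
      g 0 = 0 ∧ g' 0 = 1 ∧ g'' 0 = 0 ∧
      (∀ r ∈ Set.Ico (0 : ℝ) (1 / 2), g'' r ≤ -r) ∧
      (∀ r ∈ Set.Ico (0 : ℝ) (1 / 2), g' r ≤ 1 - 3 * r ^ 2) ∧
      (∀ r ∈ Set.Ico ε (1 / 2), g r = r * (1 - r ^ 2) / 2) := by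
  set b := ε⁻¹
  set m := ε ^ 3 / 2
  set a := b + b ^ 3
  have hm : 0 < m := by positivity
  have hb : 1 ≤ b := (one_le_inv₀ hε0).mpr (by linarith)
  have hmb : 2 * m * b ^ 3 = 1 := by simp only [m, b]; field_simp
  have hab : m * (a - b) = 1 / 2 := by simp only [a]; linarith
  have hba : b ≤ a := le_add_of_nonneg_right (by positivity)
  refine ⟨perturbedProfile m a b, perturbedProfileDeriv m a b, perturbedProfileDeriv₂ m a b,
    fun r _ ↦ (hasDerivAt_perturbedProfile m a b r).hasDerivWithinAt,
    fun r _ ↦ (hasDerivAt_perturbedProfileDeriv m a b r).hasDerivWithinAt,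
    (continuous_perturbedProfileDeriv₂ m a b).continuousOn,
    perturbedProfile_zero m a b, perturbedProfileDeriv_zero hab, perturbedProfileDeriv₂_zero m a b,
    fun r hr ↦ perturbedProfileDeriv₂_le_neg hm.le (by positivity) (by positivity) hmb.le hr.1,
    fun r hr ↦ perturbedProfileDeriv_le hm hb hab hmb.le hr.1 (by nlinarith [hr.1, hr.2]),
    fun r hr ↦ ?_⟩
  have hr₀ : 0 ≤ r := hε0.le.trans hr.1
  have hbr : 1 ≤ b * r := (one_le_inv_mul₀ hε0).mpr hr.1
  exact perturbedProfile_of_one_le (hbr.trans (by gcongr)) hbr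
end

section
/- Let 0 < ε ≤ 1/3 and let g : [0, 1/2) → ℝ be a twice continuously differentiable function satisfying: g(0) = 0, g'(0) = 1, g''(r) ≤ −r for all r ∈ [0, 1/2), g'(r) ≤ g₀'(r) = 1 − 3r² for all r ∈ [0, 1/2), and g(r) = g₀(r)/2 for all r ∈ [ε, 1/2). Let 0 < t < 1/3 and let t₀ ∈ [0, 1/2) satisfy g₀(t₀) = g(t). Then g'(t) ≤ g₀'(t₀) and 7·t·g'(t) ≥ t₀·g₀'(t₀) + g(t). -/
/-!
Comparing derivatives gives `g ≤ g₀`. Since `g₀` is increasing on `[0, 1/√3]` and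
`g₀(t₀) = g(t) ≤ g₀(t)`, it follows that `t₀ ≤ t`, whence `g'(t) ≤ g₀'(t) ≤ g₀'(t₀)`. For the
second inequality, `t₀ g₀'(t₀) + g₀(t₀) ≤ 2 t₀ ≤ 2 t`, so it suffices that `g'(t) ≥ 2/7`. As `g'`
is decreasing, this can be checked further to the right, where `g' = g₀'/2`: there `g' ≥ 2/7`
up to `1/√7`.
-/

section

open Set

section Comparison

variable {f g : ℝ → ℝ} {D : Set ℝ}

theorem antitoneOn_of_forall_hasDerivWithinAt_nonpos {f' : ℝ → ℝ} (hD : Convex ℝ D)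
    (hf : ∀ r ∈ D, HasDerivWithinAt f (f' r) D r) (hf' : ∀ r ∈ D, f' r ≤ 0) :
    AntitoneOn f D :=
  antitoneOn_of_hasDerivWithinAt_nonpos hD
    (fun r hr => (hf r hr).continuousWithinAt)
    (fun r hr => (hf r (interior_subset hr)).mono interior_subset)
    (fun r hr => hf' r (interior_subset hr))

theorem le_of_hasDerivWithinAt_le {f' g' : ℝ → ℝ} (hD : Convex ℝ D)
    (hg : ∀ r ∈ D, HasDerivWithinAt g (g' r) D r)
    (hf : ∀ r ∈ D, HasDerivWithinAt f (f' r) D r) (hle : ∀ r ∈ D, g' r ≤ f' r)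
    {a t : ℝ} (ha : a ∈ D) (ht : t ∈ D) (hat : a ≤ t) (hgf : g a ≤ f a) : g t ≤ f t := by
  have hanti : AntitoneOn (g - f) D :=
    antitoneOn_of_forall_hasDerivWithinAt_nonpos hD (fun r hr => (hg r hr).sub (hf r hr))
      fun r hr => sub_nonpos.2 (hle r hr)
  have hsub : g t - f t ≤ g a - f a := hanti ha ht hat
  linarith

theorem hasDerivWithinAt_Ico_eq_of_eqOn {a b s f' g' : ℝ} (hs : s ∈ Ico a b)
    (hg : HasDerivWithinAt g g' (Ico a b) s) (hf : HasDerivWithinAt f f' (Ico a b) s)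
    (hgf : EqOn g f (Ico s b)) : g' = f' := by
  have hsb : s ∈ Ico s b := ⟨le_rfl, hs.2⟩
  have hsub : Ico s b ⊆ Ico a b := Ico_subset_Ico_left hs.1
  exact (uniqueDiffOn_Ico s b s hsb).eq_deriv _ (hg.mono hsub)
    ((hf.mono hsub).congr hgf (hgf hsb))

end Comparison

section Cubic

theorem hasDerivAt_mul_one_sub_sq (r : ℝ) :
    HasDerivAt (fun x : ℝ => x * (1 - x ^ 2)) (1 - 3 * r ^ 2) r := by
  refine ((hasDerivAt_id' r).mul ((hasDerivAt_pow 2 r).const_sub 1)).congr_deriv ?_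
  push_cast
  ring

theorem strictMonoOn_mul_one_sub_sq :
    StrictMonoOn (fun r : ℝ => r * (1 - r ^ 2)) {r | 3 * r ^ 2 ≤ 1} := by
  intro x (hx : 3 * x ^ 2 ≤ 1) y (hy : 3 * y ^ 2 ≤ 1) hxy
  have hyx : 0 < y - x := sub_pos.2 hxy
  have hpos : 0 < 1 - (x ^ 2 + x * y + y ^ 2) := by linarith [sq_pos_of_pos hyx]
  have hfactor :
      y * (1 - y ^ 2) - x * (1 - x ^ 2) = (y - x) * (1 - (x ^ 2 + x * y + y ^ 2)) := by ring
  exact sub_pos.1 (hfactor ▸ mul_pos hyx hpos)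

variable {b ε t t₀ : ℝ} {g g' : ℝ → ℝ}

theorem two_sevenths_le_deriv_of_eq_half
    (hg : ∀ r ∈ Ico 0 b, HasDerivWithinAt g (g' r) (Ico 0 b) r)
    (hanti : AntitoneOn g' (Ico 0 b))
    (hhalf : ∀ r ∈ Ico ε b, g r = r * (1 - r ^ 2) / 2)
    (hεb : ε < b) (hε : 7 * ε ^ 2 ≤ 1) (htb : t ∈ Ico 0 b) (ht : 7 * t ^ 2 ≤ 1) :
    2 / 7 ≤ g' t := by
  obtain ⟨s, hts, hεs, hsb, hs⟩ : ∃ s, t ≤ s ∧ ε ≤ s ∧ s < b ∧ 7 * s ^ 2 ≤ 1 := by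
    refine ⟨max t ε, le_max_left t ε, le_max_right t ε, max_lt htb.2 hεb, ?_⟩
    rcases max_choice t ε with h | h <;> rwa [h]
  have hs_mem : s ∈ Ico 0 b := ⟨htb.1.trans hts, hsb⟩
  have hg's : g' s = (1 - 3 * s ^ 2) / 2 :=
    hasDerivWithinAt_Ico_eq_of_eqOn hs_mem (hg s hs_mem)
      ((hasDerivAt_mul_one_sub_sq s).div_const 2).hasDerivWithinAt
      fun r hr => hhalf r ⟨hεs.trans hr.1, hr.2⟩
  calc 2 / 7 ≤ (1 - 3 * s ^ 2) / 2 := by linarith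
    _ = g' s := hg's.symm
    _ ≤ g' t := hanti htb hs_mem hts

theorem stmt_6_general
    (hg : ∀ r ∈ Ico 0 b, HasDerivWithinAt g (g' r) (Ico 0 b) r)
    (hanti : AntitoneOn g' (Ico 0 b)) (h0 : g 0 = 0)
    (hle : ∀ r ∈ Ico 0 b, g' r ≤ 1 - 3 * r ^ 2)
    (hhalf : ∀ r ∈ Ico ε b, g r = r * (1 - r ^ 2) / 2)
    (hεb : ε < b) (hε : 7 * ε ^ 2 ≤ 1) (htb : t ∈ Ico 0 b) (ht : 7 * t ^ 2 ≤ 1)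
    (ht₀_nonneg : 0 ≤ t₀) (ht₀ : 3 * t₀ ^ 2 ≤ 1) (heq : t₀ * (1 - t₀ ^ 2) = g t) :
    g' t ≤ 1 - 3 * t₀ ^ 2 ∧ t₀ * (1 - 3 * t₀ ^ 2) + g t ≤ 7 * t * g' t := by
  have hgt : g t ≤ t * (1 - t ^ 2) :=
    le_of_hasDerivWithinAt_le (convex_Ico 0 b) hg
      (fun r _ => (hasDerivAt_mul_one_sub_sq r).hasDerivWithinAt) hle
      ⟨le_rfl, htb.1.trans_lt htb.2⟩ htb htb.1 (by simp [h0])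
  have ht_sq : 3 * t ^ 2 ≤ 1 := by linarith [sq_nonneg t]
  have ht₀t : t₀ ≤ t :=
    (strictMonoOn_mul_one_sub_sq.le_iff_le ht₀ ht_sq).1 (heq.trans_le hgt)
  have ht_nonneg : 0 ≤ t := htb.1
  have hlower : 2 / 7 ≤ g' t :=
    two_sevenths_le_deriv_of_eq_half hg hanti hhalf hεb hε htb ht
  refine ⟨(hle t htb).trans (by gcongr), ?_⟩
  calc t₀ * (1 - 3 * t₀ ^ 2) + g t = 2 * t₀ - 4 * t₀ ^ 3 := by rw [← heq]; ring
    _ ≤ 2 * t₀ := sub_le_self _ (by positivity)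
    _ ≤ 2 * t := by gcongr
    _ = 7 * t * (2 / 7) := by ring
    _ ≤ 7 * t * g' t := by gcongr

end Cubic

end

/-- Lemma 1.3: if `g` is a twice continuously differentiable function on `[0,1/2)`
with `g(0) = 0`, `g'(0) = 1`, `g''(r) ≤ -r`, `g'(r) ≤ g₀'(r) = 1 - 3r²`, and
`g = g₀/2` on `[ε, 1/2)` where `g₀(r) = r(1-r²)`, then for `0 < t < 1/3` and
`t₀` with `g₀(t₀) = g(t)` one has `g'(t) ≤ g₀'(t₀)` and
`7 t g'(t) ≥ t₀ g₀'(t₀) + g(t)`. -/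
theorem stmt_6 (ε : ℝ) (hε0 : 0 < ε) (hε : ε ≤ 1 / 3)
    (g g' g'' : ℝ → ℝ)
    (hd1 : ∀ r ∈ Set.Ico (0 : ℝ) (1 / 2), HasDerivWithinAt g (g' r) (Set.Ico 0 (1 / 2)) r)
    (hd2 : ∀ r ∈ Set.Ico (0 : ℝ) (1 / 2), HasDerivWithinAt g' (g'' r) (Set.Ico 0 (1 / 2)) r)
    (hc : ContinuousOn g'' (Set.Ico 0 (1 / 2)))
    (h0 : g 0 = 0) (h1 : g' 0 = 1)
    (h2 : ∀ r ∈ Set.Ico (0 : ℝ) (1 / 2), g'' r ≤ -r)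
    (h3 : ∀ r ∈ Set.Ico (0 : ℝ) (1 / 2), g' r ≤ 1 - 3 * r ^ 2)
    (h4 : ∀ r ∈ Set.Ico ε (1 / 2), g r = r * (1 - r ^ 2) / 2)
    (t t₀ : ℝ) (ht0 : 0 < t) (ht : t < 1 / 3)
    (ht₀ : t₀ ∈ Set.Ico (0 : ℝ) (1 / 2))
    (heq : t₀ * (1 - t₀ ^ 2) = g t) :
    g' t ≤ 1 - 3 * t₀ ^ 2 ∧ 7 * t * g' t ≥ t₀ * (1 - 3 * t₀ ^ 2) + g t := by
  have hanti := antitoneOn_of_forall_hasDerivWithinAt_nonpos (convex_Ico 0 (1 / 2)) hd2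
    fun r hr => (h2 r hr).trans (neg_nonpos.2 hr.1)
  exact stmt_6_general hd1 hanti h0 h3 h4 (by linarith) (by nlinarith) ⟨ht0.le, by linarith⟩
    (by nlinarith) ht₀.1 (by nlinarith [ht₀.1, ht₀.2]) heq
end

section
/- Let E be a real inner product space and let A, B, X, Y ∈ E satisfy ⟨A, X⟩ = ⟨A, Y⟩ = ⟨B, X⟩ = ⟨B, Y⟩ = 0, ‖A + X‖ = ‖B + Y‖ = 1, and ⟨A + X, B + Y⟩ = 0. Then W(A, B; X, Y) ≥ (1/2)·(⟨A, A⟩ + ⟨B, B⟩)·(⟨X, X⟩ + ⟨Y, Y⟩). -/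
open scoped RealInnerProductSpace

section SeminormedSpaces

variable {E F : Type*} [SeminormedAddCommGroup E] [InnerProductSpace ℝ E]
  [SeminormedAddCommGroup F] [InnerProductSpace ℝ F]

lemma inner_add_add_of_inner_eq_zero {A B X Y : E} (hAY : ⟪A, Y⟫ = 0) (hBX : ⟪B, X⟫ = 0) :
    ⟪A + X, B + Y⟫ = ⟪A, B⟫ + ⟪X, Y⟫ := by
  rw [inner_add_left, inner_add_right, inner_add_right, hAY, real_inner_comm B X, hBX,
    add_zero, zero_add]

lemma inner_self_add_inner_self_eq_of_norm_add_eq {A B X Y : E}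
    (hAX : ⟪A, X⟫ = 0) (hBY : ⟪B, Y⟫ = 0) (hnorm : ‖A + X‖ = ‖B + Y‖) :
    ⟪A, A⟫ + ⟪X, X⟫ = ⟪B, B⟫ + ⟪Y, Y⟫ := by
  rw [← inner_add_add_of_inner_eq_zero hAX hAX, ← inner_add_add_of_inner_eq_zero hBY hBY,
    real_inner_self_eq_norm_sq, real_inner_self_eq_norm_sq, hnorm]

lemma inner_cross_eq_half_mul_add_sq {A B : E} {X Y : F}
    (hself : ⟪A, A⟫ + ⟪X, X⟫ = ⟪B, B⟫ + ⟪Y, Y⟫) (hcross : ⟪A, B⟫ + ⟪X, Y⟫ = 0) :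
    ⟪A, A⟫ * ⟪Y, Y⟫ + ⟪B, B⟫ * ⟪X, X⟫ - 2 * ⟪A, B⟫ * ⟪X, Y⟫ =
      (1 / 2) * (⟪A, A⟫ + ⟪B, B⟫) * (⟪X, X⟫ + ⟪Y, Y⟫) +
        ((1 / 2) * (⟪A, A⟫ - ⟪B, B⟫) ^ 2 + 2 * ⟪A, B⟫ ^ 2) := by
  linear_combination (-(1 / 2) * (⟪A, A⟫ - ⟪B, B⟫)) * hself - 2 * ⟪A, B⟫ * hcross

theorem stmt_9_general {A B X Y : E}
    (hAX : ⟪A, X⟫ = 0) (hAY : ⟪A, Y⟫ = 0) (hBX : ⟪B, X⟫ = 0) (hBY : ⟪B, Y⟫ = 0)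
    (hnorm : ‖A + X‖ = ‖B + Y‖) (horth : ⟪A + X, B + Y⟫ = 0) :
    ⟪A, A⟫ * ⟪Y, Y⟫ + ⟪B, B⟫ * ⟪X, X⟫ - 2 * ⟪A, B⟫ * ⟪X, Y⟫ ≥
      (1 / 2) * (⟪A, A⟫ + ⟪B, B⟫) * (⟪X, X⟫ + ⟪Y, Y⟫) := by
  have hself : ⟪A, A⟫ + ⟪X, X⟫ = ⟪B, B⟫ + ⟪Y, Y⟫ :=
    inner_self_add_inner_self_eq_of_norm_add_eq hAX hBY hnorm
  have hcross : ⟪A, B⟫ + ⟪X, Y⟫ = 0 :=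
    (inner_add_add_of_inner_eq_zero hAY hBX).symm.trans horth
  rw [inner_cross_eq_half_mul_add_sq hself hcross]
  exact le_add_of_nonneg_right (by positivity)

end SeminormedSpaces

/-- If `{A, B} ⊥ {X, Y}` and `A + X`, `B + Y` form an orthonormal system then
`W(A, B; X, Y) ≥ (1/2)(⟪A, A⟫ + ⟪B, B⟫)(⟪X, X⟫ + ⟪Y, Y⟫)`. -/
theorem stmt_9 {E : Type*} [NormedAddCommGroup E] [InnerProductSpace ℝ E]
    (A B X Y : E)
    (hAX : ⟪A, X⟫ = 0) (hAY : ⟪A, Y⟫ = 0) (hBX : ⟪B, X⟫ = 0) (hBY : ⟪B, Y⟫ = 0)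
    (hn1 : ‖A + X‖ = 1) (hn2 : ‖B + Y‖ = 1) (horth : ⟪A + X, B + Y⟫ = 0) :
    ⟪A, A⟫ * ⟪Y, Y⟫ + ⟪B, B⟫ * ⟪X, X⟫ - 2 * ⟪A, B⟫ * ⟪X, Y⟫ ≥
      (1 / 2) * (⟪A, A⟫ + ⟪B, B⟫) * (⟪X, X⟫ + ⟪Y, Y⟫) :=
  stmt_9_general hAX hAY hBX hBY (hn1.trans hn2.symm) horth
end

section
/- For every ε > 0 there exist a function φ : (0, ∞) → ℝ and constants δ₁, δ₂ with 0 < δ₁ < δ₂ ≤ ε such that: φ is infinitely differentiable; 0 ≤ φ(x) ≤ 1 for all x > 0; φ(x) = 1 for all x ∈ (0, δ₁] and φ(x) = 0 for all x ≥ δ₂; and |x·φ'(x)| ≤ ε and |x²·φ''(x)| ≤ ε for all x > 0. -/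
/-! In the variable `u = log x` the operators `x d/dx` and `x² d²/dx²` become `d/du` and
`d²/du² - d/du`. A smooth step in `u` stretched to width `1 / a` has first and second derivatives
of order `a` and `a²`, so both weighted derivatives are small once `a` is. -/

open Filter Real Set Topology

section LogCoordinate

variable {E : Type*} [NormedAddCommGroup E] [NormedSpace ℝ E] {f : ℝ → E} {x : ℝ}

theorem deriv_comp_log (hx : x ≠ 0) (hf : DifferentiableAt ℝ f (log x)) :
    deriv (fun y ↦ f (log y)) x = x⁻¹ • deriv f (log x) :=
  (hf.hasDerivAt.scomp x (hasDerivAt_log hx)).deriv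

theorem smul_deriv_comp_log (hx : x ≠ 0) (hf : DifferentiableAt ℝ f (log x)) :
    x • deriv (fun y ↦ f (log y)) x = deriv f (log x) := by
  rw [deriv_comp_log hx hf, smul_inv_smul₀ hx]

theorem sq_smul_deriv_deriv_comp_log (hx : x ≠ 0)
    (hf : ∀ᶠ u in 𝓝 (log x), DifferentiableAt ℝ f u)
    (hf' : DifferentiableAt ℝ (deriv f) (log x)) :
    x ^ 2 • deriv (deriv fun y ↦ f (log y)) x = deriv (deriv f) (log x) - deriv f (log x) := by
  have hderiv : (deriv fun y ↦ f (log y)) =ᶠ[𝓝 x] fun y ↦ y⁻¹ • deriv f (log y) := by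
    filter_upwards [(continuousAt_log hx).eventually hf, eventually_ne_nhds hx] with y hfy hy
    exact deriv_comp_log hy hfy
  have hsecond : HasDerivAt (fun y ↦ y⁻¹ • deriv f (log y))
      (x⁻¹ • x⁻¹ • deriv (deriv f) (log x) + (-(x ^ 2)⁻¹) • deriv f (log x)) x :=
    (hasDerivAt_inv hx).smul (hf'.hasDerivAt.scomp x (hasDerivAt_log hx))
  rw [hderiv.deriv_eq, hsecond.deriv]
  match_scalars <;> field_simp

end LogCoordinate

section AffineReflection

variable {𝕜 E : Type*} [NontriviallyNormedField 𝕜] [NormedAddCommGroup E] [NormedSpace 𝕜 E]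

theorem deriv_comp_mul_const_sub (f : 𝕜 → E) (a c : 𝕜) :
    deriv (fun u ↦ f (a * (c - u))) = fun u ↦ -(a • deriv f (a * (c - u))) := by
  ext u
  rw [deriv_comp_const_sub (f := fun v ↦ f (a * v)), deriv_comp_mul_left]

theorem deriv_deriv_comp_mul_const_sub (f : 𝕜 → E) (a c : 𝕜) :
    deriv (deriv fun u ↦ f (a * (c - u))) = fun u ↦ a ^ 2 • deriv (deriv f) (a * (c - u)) := by
  ext u
  rw [deriv_comp_mul_const_sub, deriv.fun_neg, deriv_fun_const_smul_field,
    deriv_comp_mul_const_sub, smul_neg, neg_neg, smul_smul, sq]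

end AffineReflection

theorem hasCompactSupport_deriv_of_eqOn_const {E : Type*} [NormedAddCommGroup E]
    [NormedSpace ℝ E] {f : ℝ → E} {a b : ℝ} {c d : E}
    (ha : EqOn f (fun _ ↦ c) (Iio a)) (hb : EqOn f (fun _ ↦ d) (Ioi b)) :
    HasCompactSupport (deriv f) := by
  refine .intro (isCompact_Icc (a := a) (b := b)) fun x hx ↦ ?_
  rw [mem_Icc, not_and_or, not_le, not_le] at hx
  rcases hx with hxa | hbx
  · rw [(ha.eventuallyEq_of_mem (Iio_mem_nhds hxa)).deriv_eq, deriv_const]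
  · rw [(hb.eventuallyEq_of_mem (Ioi_mem_nhds hbx)).deriv_eq, deriv_const]

theorem hasCompactSupport_deriv_smoothTransition : HasCompactSupport (deriv smoothTransition) :=
  hasCompactSupport_deriv_of_eqOn_const
    (fun _ hx ↦ smoothTransition.zero_of_nonpos (le_of_lt hx))
    (fun _ hx ↦ smoothTransition.one_of_one_le (le_of_lt hx))

theorem contDiff_deriv_smoothTransition : ContDiff ℝ 1 (deriv smoothTransition) :=
  (smoothTransition.contDiff (n := 2)).deriv'

theorem exists_abs_deriv_smoothTransition_le : ∃ C, ∀ u, |deriv smoothTransition u| ≤ C :=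
  hasCompactSupport_deriv_smoothTransition.exists_bound_of_continuous
    contDiff_deriv_smoothTransition.continuous

theorem exists_abs_deriv_deriv_smoothTransition_le :
    ∃ D, ∀ u, |deriv (deriv smoothTransition) u| ≤ D :=
  hasCompactSupport_deriv_smoothTransition.deriv.exists_bound_of_continuous
    (contDiff_deriv_smoothTransition.continuous_deriv le_rfl)

/-- The cutoff on `(0, ∞)` that is a smooth step in `log x`: for `a > 0` it descends from `1` at
`δ * exp (-a⁻¹)` to `0` at `δ`, so the transition has width `a⁻¹` in the logarithmic scale. -/
noncomputable def logCutoff (a δ x : ℝ) : ℝ :=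
  smoothTransition (a * (log δ - log x))

namespace logCutoff

variable {a δ x : ℝ}

theorem contDiffOn {n : ℕ∞} : ContDiffOn ℝ n (logCutoff a δ) {0}ᶜ :=
  smoothTransition.contDiff.comp_contDiffOn
    (contDiffOn_const.mul (contDiffOn_const.sub contDiffOn_log))

theorem nonneg (a δ x : ℝ) : 0 ≤ logCutoff a δ x :=
  smoothTransition.nonneg _

theorem le_one (a δ x : ℝ) : logCutoff a δ x ≤ 1 :=
  smoothTransition.le_one _

theorem eq_one_of_le (ha : 0 < a) (hδ : 0 < δ) (hx : 0 < x) (hxδ : x ≤ δ * exp (-a⁻¹)) :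
    logCutoff a δ x = 1 := by
  have hlog : log x ≤ log δ - a⁻¹ := by
    simpa only [log_mul hδ.ne' (exp_ne_zero _), log_exp, ← sub_eq_add_neg] using log_le_log hx hxδ
  apply smoothTransition.one_of_one_le
  calc
    1 = a * a⁻¹ := (mul_inv_cancel₀ ha.ne').symm
    _ ≤ a * (log δ - log x) := by gcongr; linarith

theorem eq_zero_of_le (ha : 0 ≤ a) (hδ : 0 < δ) (hδx : δ ≤ x) : logCutoff a δ x = 0 :=
  smoothTransition.zero_of_nonpos <|
    mul_nonpos_of_nonneg_of_nonpos ha (sub_nonpos.2 (log_le_log hδ hδx))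

theorem mul_deriv (hx : x ≠ 0) :
    x * deriv (logCutoff a δ) x = -(a * deriv smoothTransition (a * (log δ - log x))) := by
  have hstep : Differentiable ℝ fun u ↦ smoothTransition (a * (log δ - u)) :=
    (smoothTransition.contDiff (n := 1)).differentiable one_ne_zero |>.comp (by fun_prop)
  have hEuler := smul_deriv_comp_log hx (hstep (log x))
  rwa [deriv_comp_mul_const_sub] at hEuler

theorem sq_mul_deriv_deriv (hx : x ≠ 0) :
    x ^ 2 * deriv (deriv (logCutoff a δ)) x =
      a ^ 2 * deriv (deriv smoothTransition) (a * (log δ - log x)) +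
        a * deriv smoothTransition (a * (log δ - log x)) := by
  have hstep : ContDiff ℝ 2 fun u ↦ smoothTransition (a * (log δ - u)) :=
    smoothTransition.contDiff.comp (by fun_prop)
  have hEuler := sq_smul_deriv_deriv_comp_log hx
    (.of_forall (hstep.differentiable two_ne_zero)) (hstep.differentiable_deriv_two _)
  rwa [deriv_deriv_comp_mul_const_sub, deriv_comp_mul_const_sub, sub_neg_eq_add] at hEuler

theorem abs_mul_deriv_le {C : ℝ} (hC : ∀ u, |deriv smoothTransition u| ≤ C) (ha : 0 ≤ a)
    (hx : x ≠ 0) : |x * deriv (logCutoff a δ) x| ≤ a * C := by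
  rw [mul_deriv hx, abs_neg, abs_mul, abs_of_nonneg ha]
  gcongr
  exact hC _

theorem abs_sq_mul_deriv_deriv_le {C D : ℝ} (hC : ∀ u, |deriv smoothTransition u| ≤ C)
    (hD : ∀ u, |deriv (deriv smoothTransition) u| ≤ D) (ha : 0 ≤ a) (hx : x ≠ 0) :
    |x ^ 2 * deriv (deriv (logCutoff a δ)) x| ≤ a ^ 2 * D + a * C := by
  rw [sq_mul_deriv_deriv hx]
  refine (abs_add_le _ _).trans ?_
  rw [abs_mul, abs_mul, abs_of_nonneg ha, abs_of_nonneg (sq_nonneg a)]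
  gcongr
  exacts [hD _, hC _]

theorem exists_abs_mul_deriv_le_and_abs_sq_mul_deriv_deriv_le {ε : ℝ} (hε : 0 < ε) :
    ∃ a > 0, ∀ δ x : ℝ, x ≠ 0 →
      |x * deriv (logCutoff a δ) x| ≤ ε ∧ |x ^ 2 * deriv (deriv (logCutoff a δ)) x| ≤ ε := by
  obtain ⟨C, hC⟩ := exists_abs_deriv_smoothTransition_le
  obtain ⟨D, hD⟩ := exists_abs_deriv_deriv_smoothTransition_le
  have hfirst : ∀ᶠ a in 𝓝 (0 : ℝ), a * C < ε :=
    ContinuousAt.eventually_lt (by fun_prop) continuousAt_const (by simpa using hε)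
  have hsecond : ∀ᶠ a in 𝓝 (0 : ℝ), a ^ 2 * D + a * C < ε :=
    ContinuousAt.eventually_lt (by fun_prop) continuousAt_const (by simpa using hε)
  obtain ⟨a, ha, haC, haD⟩ := (hfirst.and hsecond).exists_gt
  exact ⟨a, ha, fun _ _ hx ↦ ⟨(abs_mul_deriv_le hC ha.le hx).trans haC.le,
    (abs_sq_mul_deriv_deriv_le hC hD ha.le hx).trans haD.le⟩⟩

end logCutoff

/-- Lemma 4.1: for every `ε > 0` there exist a smooth cutoff `φ` on `(0, ∞)` and
`0 < δ₁ < δ₂ ≤ ε` with `0 ≤ φ ≤ 1`, `φ = 1` on `(0, δ₁]`, `φ = 0` on `[δ₂, ∞)`,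
and `|x φ'(x)| ≤ ε`, `|x² φ''(x)| ≤ ε` for all `x > 0`. -/
theorem stmt_14 (ε : ℝ) (hε : 0 < ε) :
    ∃ (φ : ℝ → ℝ) (δ₁ δ₂ : ℝ), 0 < δ₁ ∧ δ₁ < δ₂ ∧ δ₂ ≤ ε ∧
      ContDiffOn ℝ (⊤ : ℕ∞) φ (Set.Ioi 0) ∧
      (∀ x : ℝ, 0 < x → 0 ≤ φ x ∧ φ x ≤ 1) ∧
      (∀ x : ℝ, 0 < x → x ≤ δ₁ → φ x = 1) ∧
      (∀ x : ℝ, δ₂ ≤ x → φ x = 0) ∧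
      (∀ x : ℝ, 0 < x → |x * deriv φ x| ≤ ε ∧ |x ^ 2 * deriv (deriv φ) x| ≤ ε) := by
  obtain ⟨a, ha, hderiv⟩ := logCutoff.exists_abs_mul_deriv_le_and_abs_sq_mul_deriv_deriv_le hε
  have hδ : ε * exp (-a⁻¹) < ε :=
    mul_lt_of_lt_one_right hε (exp_lt_one_iff.2 (neg_neg_of_pos (inv_pos.2 ha)))
  exact ⟨logCutoff a ε, ε * exp (-a⁻¹), ε, by positivity, hδ, le_rfl,
    logCutoff.contDiffOn.mono fun _ hx ↦ ne_of_gt hx,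
    fun x _ ↦ ⟨logCutoff.nonneg a ε x, logCutoff.le_one a ε x⟩,
    fun _ ↦ logCutoff.eq_one_of_le ha hε,
    fun _ ↦ logCutoff.eq_zero_of_le ha.le hε,
    fun x hx ↦ hderiv ε x hx.ne'⟩
end

section
/- Let N > 0 and let f : ℝ → ℝ be an infinitely differentiable function with 0 ≤ f ≤ 1, f(x) = 1 for x ≤ 1, f(x) = 0 for x ≥ 2, and |f'(x)| ≤ N and |f''(x)| ≤ N for all x. Let ε > 0 and let λ ∈ (0, 1) satisfy 2Nλ(1 + λ) ≤ ε. Then for every δ > 0, the function φ : (0, ∞) → ℝ defined by φ(x) = f(x^λ / δ) satisfies |x·φ'(x)| ≤ ε and |x²·φ''(x)| ≤ ε for all x > 0. -/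
/-!
Put `u = x ^ lam / δ`, so that `x u' = lam u`. For `φ(x) = f(u)` the dilation-invariant quantities
`x φ'` and `x² φ''` become
`x φ' = lam (u f'(u))` and `x² φ'' = lam² (u² f''(u)) + lam (lam - 1) (u f'(u))`.
Since `f` is constant beyond `2`, `u f'(u)` and `u² f''(u)` are bounded by `2 N` and `4 N`, and the
powers of `lam` supply the smallness.
-/

open Set Filter Topology

section

variable {E : Type*} [NormedAddCommGroup E] [NormedSpace ℝ E] {f : ℝ → E} {x : ℝ}

theorem hasDerivAt_rpow_div (lam δ : ℝ) (hx : x ≠ 0) :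
    HasDerivAt (fun y : ℝ => y ^ lam / δ) (lam * (x ^ lam / δ) / x) x := by
  refine ((Real.hasDerivAt_rpow_const (Or.inl hx)).div_const δ).congr_deriv ?_
  rw [Real.rpow_sub_one hx]
  ring

theorem hasDerivAt_comp_rpow_div {lam δ : ℝ} (hx : x ≠ 0)
    (hf : DifferentiableAt ℝ f (x ^ lam / δ)) :
    HasDerivAt (fun y : ℝ => f (y ^ lam / δ))
      ((lam * (x ^ lam / δ) / x) • deriv f (x ^ lam / δ)) x :=
  hf.hasDerivAt.scomp x (hasDerivAt_rpow_div lam δ hx)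

theorem smul_deriv_comp_rpow_div {lam δ : ℝ} (hx : x ≠ 0)
    (hf : DifferentiableAt ℝ f (x ^ lam / δ)) :
    x • deriv (fun y : ℝ => f (y ^ lam / δ)) x =
      lam • (x ^ lam / δ) • deriv f (x ^ lam / δ) := by
  rw [(hasDerivAt_comp_rpow_div hx hf).deriv, smul_smul, smul_smul, mul_div_cancel₀ _ hx]

theorem sq_smul_deriv_deriv_comp_rpow_div {lam δ : ℝ} (hx : x ≠ 0)
    (hf : ∀ᶠ u in 𝓝 (x ^ lam / δ), DifferentiableAt ℝ f u)
    (hf' : DifferentiableAt ℝ (deriv f) (x ^ lam / δ)) :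
    x ^ 2 • deriv (deriv fun y : ℝ => f (y ^ lam / δ)) x =
      lam ^ 2 • (x ^ lam / δ) ^ 2 • deriv (deriv f) (x ^ lam / δ) +
        (lam * (lam - 1)) • (x ^ lam / δ) • deriv f (x ^ lam / δ) := by
  have hderiv : deriv (fun y : ℝ => f (y ^ lam / δ)) =ᶠ[𝓝 x]
      fun y => (lam * (y ^ lam / δ) / y) • deriv f (y ^ lam / δ) := by
    filter_upwards [eventually_ne_nhds hx,
      (hasDerivAt_rpow_div lam δ hx).continuousAt.eventually hf] with y hy hfy
    exact (hasDerivAt_comp_rpow_div hy hfy).deriv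
  have hcoeff : HasDerivAt (fun y : ℝ => lam * (y ^ lam / δ) / y)
      ((lam * (lam * (x ^ lam / δ) / x) * x - lam * (x ^ lam / δ) * 1) / x ^ 2) x :=
    ((hasDerivAt_rpow_div lam δ hx).const_mul lam).fun_div (hasDerivAt_id x) hx
  rw [hderiv.deriv_eq, (hcoeff.fun_smul (hasDerivAt_comp_rpow_div hx hf')).deriv]
  match_scalars <;> field_simp

theorem norm_smul_deriv_comp_rpow_div_le {lam δ A : ℝ} (hx : x ≠ 0)
    (hf : DifferentiableAt ℝ f (x ^ lam / δ))
    (hA : ‖(x ^ lam / δ) • deriv f (x ^ lam / δ)‖ ≤ A) :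
    ‖x • deriv (fun y : ℝ => f (y ^ lam / δ)) x‖ ≤ |lam| * A := by
  rw [smul_deriv_comp_rpow_div hx hf, norm_smul, Real.norm_eq_abs]
  gcongr

theorem norm_sq_smul_deriv_deriv_comp_rpow_div_le {lam δ A B : ℝ} (hx : x ≠ 0)
    (hf : ∀ᶠ u in 𝓝 (x ^ lam / δ), DifferentiableAt ℝ f u)
    (hf' : DifferentiableAt ℝ (deriv f) (x ^ lam / δ))
    (hA : ‖(x ^ lam / δ) • deriv f (x ^ lam / δ)‖ ≤ A)
    (hB : ‖(x ^ lam / δ) ^ 2 • deriv (deriv f) (x ^ lam / δ)‖ ≤ B) :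
    ‖x ^ 2 • deriv (deriv fun y : ℝ => f (y ^ lam / δ)) x‖ ≤
      lam ^ 2 * B + |lam * (lam - 1)| * A := by
  rw [sq_smul_deriv_deriv_comp_rpow_div hx hf hf']
  refine norm_add_le_of_le ?_ ?_
  · rw [norm_smul_of_nonneg (sq_nonneg lam)]
    gcongr
  · rw [norm_smul, Real.norm_eq_abs]
    gcongr

theorem eqOn_deriv_zero_of_eqOn_const {s : Set ℝ} {c : E} (hs : IsOpen s)
    (hf : EqOn f (fun _ => c) s) : EqOn (deriv f) 0 s :=
  (hf.deriv hs).trans fun u _ => deriv_const u c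

theorem norm_pow_smul_le_of_eqOn_zero_Ioi {g : ℝ → E} {a N : ℝ} (ha : 0 < a) (hg : EqOn g 0 (Ioi a))
    (hN : ∀ u ∈ Ioc 0 a, ‖g u‖ ≤ N) (hx : 0 < x) (k : ℕ) : ‖x ^ k • g x‖ ≤ a ^ k * N := by
  rcases le_or_gt x a with hxa | hax
  · rw [norm_smul, norm_pow, Real.norm_of_nonneg hx.le]
    gcongr
    exact hN x ⟨hx, hxa⟩
  · have hN0 : 0 ≤ N := (norm_nonneg _).trans (hN a ⟨ha, le_rfl⟩)
    rw [hg hax, Pi.zero_apply, smul_zero, norm_zero]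
    positivity

theorem stmt_15_general {a N ε lam δ : ℝ} {c : E} (ha : 1 ≤ a)
    (hf : DifferentiableOn ℝ f (Ioi 0)) (hf' : DifferentiableOn ℝ (deriv f) (Ioi 0))
    (hfa : EqOn f (fun _ => c) (Ioi a))
    (hfd1 : ∀ u ∈ Ioc 0 a, ‖deriv f u‖ ≤ N) (hfd2 : ∀ u ∈ Ioc 0 a, ‖deriv (deriv f) u‖ ≤ N)
    (hlam0 : 0 ≤ lam) (hlam1 : lam ≤ 1) (hlamε : a * N * lam * (1 + (a - 1) * lam) ≤ ε)
    (hδ : 0 < δ) (hx : 0 < x) :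
    ‖x • deriv (fun y : ℝ => f (y ^ lam / δ)) x‖ ≤ ε ∧
      ‖x ^ 2 • deriv (deriv fun y : ℝ => f (y ^ lam / δ)) x‖ ≤ ε := by
  have ha0 : 0 < a := one_pos.trans_le ha
  have hu : 0 < x ^ lam / δ := by positivity
  have hderiv : EqOn (deriv f) 0 (Ioi a) := eqOn_deriv_zero_of_eqOn_const isOpen_Ioi hfa
  have hderiv2 : EqOn (deriv (deriv f)) 0 (Ioi a) :=
    eqOn_deriv_zero_of_eqOn_const isOpen_Ioi hderiv
  have hbound1 : ‖(x ^ lam / δ) • deriv f (x ^ lam / δ)‖ ≤ a * N := by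
    simpa only [pow_one] using norm_pow_smul_le_of_eqOn_zero_Ioi ha0 hderiv hfd1 hu 1
  have hbound2 : ‖(x ^ lam / δ) ^ 2 • deriv (deriv f) (x ^ lam / δ)‖ ≤ a ^ 2 * N :=
    norm_pow_smul_le_of_eqOn_zero_Ioi ha0 hderiv2 hfd2 hu 2
  have hdiff := hf.eventually_differentiableAt (Ioi_mem_nhds hu)
  have hdiff' := hf'.differentiableAt (Ioi_mem_nhds hu)
  constructor
  · calc ‖x • deriv (fun y : ℝ => f (y ^ lam / δ)) x‖
        ≤ |lam| * (a * N) :=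
          norm_smul_deriv_comp_rpow_div_le hx.ne' hdiff.self_of_nhds hbound1
      _ = a * N * lam := by rw [abs_of_nonneg hlam0, mul_comm]
      _ ≤ a * N * lam * (1 + (a - 1) * lam) :=
          le_mul_of_one_le_right (mul_nonneg ((norm_nonneg _).trans hbound1) hlam0)
            (le_add_of_nonneg_right (mul_nonneg (sub_nonneg.2 ha) hlam0))
      _ ≤ ε := hlamε
  · calc ‖x ^ 2 • deriv (deriv fun y : ℝ => f (y ^ lam / δ)) x‖
        ≤ lam ^ 2 * (a ^ 2 * N) + |lam * (lam - 1)| * (a * N) :=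
          norm_sq_smul_deriv_deriv_comp_rpow_div_le hx.ne' hdiff hdiff' hbound1 hbound2
      _ = a * N * lam * (1 + (a - 1) * lam) := by
          rw [abs_of_nonpos (mul_nonpos_of_nonneg_of_nonpos hlam0 (sub_nonpos.2 hlam1))]
          ring
      _ ≤ ε := hlamε

end

/-- Given a smooth cutoff `f` with `0 ≤ f ≤ 1`, `f = 1` on `(-∞, 1]`, `f = 0` on
`[2, ∞)`, `|f'| ≤ N`, `|f''| ≤ N`, and `lam ∈ (0, 1)` with `2·N·lam·(1+lam) ≤ ε`,
the function `φ(x) = f(x^lam / δ)` satisfies `|x φ'(x)| ≤ ε` and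
`|x² φ''(x)| ≤ ε` for all `x > 0` and every `δ > 0`. -/
theorem stmt_15 (N : ℝ) (hN : 0 < N) (f : ℝ → ℝ)
    (hf : ContDiff ℝ (⊤ : ℕ∞) f)
    (hf01 : ∀ x : ℝ, 0 ≤ f x ∧ f x ≤ 1)
    (hf1 : ∀ x : ℝ, x ≤ 1 → f x = 1) (hf2 : ∀ x : ℝ, 2 ≤ x → f x = 0)
    (hfd1 : ∀ x : ℝ, |deriv f x| ≤ N) (hfd2 : ∀ x : ℝ, |deriv (deriv f) x| ≤ N)
    (ε lam : ℝ) (hε : 0 < ε) (hlam0 : 0 < lam) (hlam1 : lam < 1)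
    (hlamε : 2 * N * lam * (1 + lam) ≤ ε) (δ : ℝ) (hδ : 0 < δ) :
    ∀ x : ℝ, 0 < x →
      |x * deriv (fun y : ℝ => f (y ^ lam / δ)) x| ≤ ε ∧
      |x ^ 2 * deriv (deriv (fun y : ℝ => f (y ^ lam / δ))) x| ≤ ε := by
  exact fun x hx => stmt_15_general one_le_two
    (hf.differentiable (by simp)).differentiableOn
    ((contDiff_infty_iff_deriv.1 hf).2.differentiable (by simp)).differentiableOn
    (fun u hu => hf2 u (le_of_lt hu)) (fun u _ => hfd1 u) (fun u _ => hfd2 u)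
    hlam0.le hlam1.le (by linarith) hδ hx
end
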